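/- Let X and Y be complex Banach spaces and let P_F : X → X, S : Y → X, R : X → Y, V : Y → Y be continuous linear operators such that id_X − P_F and id_Y − V are invertible, and suppose ‖(id_X − P_F)⁻¹ ∘ S ∘ (id_Y − V)⁻¹ ∘ R‖ ≤ r for some real r with 0 ≤ r < 1. Suppose y₁ ∈ X, y₂ ∈ Y, q₁ ∈ X, q₂ ∈ Y satisfy (id_X − P_F) y₁ + S y₂ = q₁ and R y₁ + (id_Y − V) y₂ = q₂, and suppose ỹ₁ ∈ X satisfies the truncated equation (id_X − P_F) ỹ₁ = q₁. Then ‖y₁ − ỹ₁‖ ≤ (1/(1−r)) · ‖(id_X − P_F)⁻¹‖ · ‖S ∘ (id_Y − V)⁻¹‖ · ‖q₂‖ + (r/(1−r)) · ‖(id_X − P_F)⁻¹‖ · ‖q₁‖. -/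

import Mathlib

/-!
Write `T = AP ∘ S ∘ VI ∘ R` and `d = y₁ - yt₁`. Eliminating `y₂ = VI (q₂ - R y₁)` from the block
system and subtracting the truncated equation gives `d = T d + T yt₁ - AP (S (VI q₂))`, where
`yt₁ = AP q₁`. Since `‖T‖ ≤ r < 1`, the term `T d` is absorbed into the left-hand side, and
dividing by `1 - r` gives the bound.
-/

theorem stmt5
    {X Y : Type*} [NormedAddCommGroup X] [NormedSpace ℂ X] [CompleteSpace X]
    [NormedAddCommGroup Y] [NormedSpace ℂ Y] [CompleteSpace Y]
    (PF : X →L[ℂ] X) (S : Y →L[ℂ] X) (R : X →L[ℂ] Y) (V : Y →L[ℂ] Y)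
    (AP : X →L[ℂ] X) (VI : Y →L[ℂ] Y)
    (hAP1 : ((1 : X →L[ℂ] X) - PF) ∘L AP = 1) (hAP2 : AP ∘L ((1 : X →L[ℂ] X) - PF) = 1)
    (hVI1 : ((1 : Y →L[ℂ] Y) - V) ∘L VI = 1) (hVI2 : VI ∘L ((1 : Y →L[ℂ] Y) - V) = 1)
    (r : ℝ) (hr0 : 0 ≤ r) (hr1 : r < 1)
    (hnorm : ‖AP ∘L S ∘L VI ∘L R‖ ≤ r)
    (y₁ q₁ yt₁ : X) (y₂ q₂ : Y)
    (heq1 : ((1 : X →L[ℂ] X) - PF) y₁ + S y₂ = q₁)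
    (heq2 : R y₁ + ((1 : Y →L[ℂ] Y) - V) y₂ = q₂)
    (htrunc : ((1 : X →L[ℂ] X) - PF) yt₁ = q₁) :
    ‖y₁ - yt₁‖ ≤ (1 / (1 - r)) * ‖AP‖ * ‖S ∘L VI‖ * ‖q₂‖
      + (r / (1 - r)) * ‖AP‖ * ‖q₁‖ := by
  have hA : ∀ x, AP (((1 : X →L[ℂ] X) - PF) x) = x := fun x => DFunLike.congr_fun hAP2 x
  have hV : ∀ y, VI (((1 : Y →L[ℂ] Y) - V) y) = y := fun y => DFunLike.congr_fun hVI2 y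
  have hyt : yt₁ = AP q₁ := by rw [← htrunc, hA]
  have hy₁ : y₁ = AP q₁ - AP (S y₂) := by rw [← heq1, map_add, hA, add_sub_cancel_right]
  have hy₂ : y₂ = VI q₂ - VI (R y₁) := by rw [← heq2, map_add, hV, add_sub_cancel_left]
  have hT : ∀ x, ‖AP (S (VI (R x)))‖ ≤ r * ‖x‖ := fun x =>
    (AP ∘L S ∘L VI ∘L R).le_of_opNorm_le hnorm x
  have hd : y₁ - yt₁ = AP (S (VI (R (y₁ - yt₁)))) + AP (S (VI (R yt₁))) - AP (S (VI q₂)) := by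
    have h1 : y₁ - yt₁ = - AP (S y₂) := by rw [hyt, sub_eq_iff_eq_add, neg_add_eq_sub]; exact hy₁
    have h2 : AP (S y₂) = AP (S (VI q₂)) - AP (S (VI (R y₁))) := by
      rw [← map_sub, ← map_sub, ← hy₂]
    rw [← map_add, ← map_add, ← map_add, ← map_add, sub_add_cancel, h1, h2, neg_sub]
  have hq₂ : ‖AP (S (VI q₂))‖ ≤ ‖AP‖ * (‖S ∘L VI‖ * ‖q₂‖) :=
    AP.le_opNorm_of_le ((S ∘L VI).le_opNorm q₂)
  have hytn : r * ‖yt₁‖ ≤ r * (‖AP‖ * ‖q₁‖) :=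
    mul_le_mul_of_nonneg_left (hyt ▸ AP.le_opNorm q₁) hr0
  have hle : ‖y₁ - yt₁‖ ≤ ‖AP (S (VI (R (y₁ - yt₁))))‖ + ‖AP (S (VI (R yt₁)))‖
      + ‖AP (S (VI q₂))‖ := by
    conv_lhs => rw [hd]
    exact (norm_sub_le _ _).trans (add_le_add_left (norm_add_le _ _) _)
  have hpos : 0 < 1 - r := sub_pos.mpr hr1
  have hrhs : (1 / (1 - r)) * ‖AP‖ * ‖S ∘L VI‖ * ‖q₂‖ + (r / (1 - r)) * ‖AP‖ * ‖q₁‖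
      = (‖AP‖ * (‖S ∘L VI‖ * ‖q₂‖) + r * (‖AP‖ * ‖q₁‖)) / (1 - r) := by ring
  rw [hrhs, le_div_iff₀ hpos]
  linarith [hT (y₁ - yt₁), hT yt₁]
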